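/- Let x* be a local minimizer of (NLP) at which MFCQ holds. Let r be the rank of J(x*) and assume that the rank of J(x) is at most r+1 for every x in some neighborhood of x*. Assume the smooth-SVD condition: there exist functions x ↦ U(x) ∈ ℝ^{(m+q)×(m+q)}, x ↦ Σ(x) ∈ ℝ^{(m+q)×n}, x ↦ V(x) ∈ ℝ^{n×n}, differentiable in a neighborhood of x*, such that J(x) = U(x)Σ(x)V(x)ᵀ, Σ(x) is diagonal with diagonal entries σ₁(x),…,σ_k(x) where k := min{m+q, n} and σ_i(x) = 0 whenever i exceeds the rank of J(x), and the columns of U(x*) and the columns of V(x*) are non-zero and pairwise orthogonal. Assume in addition that GSCS holds at x*. Then there exists a Lagrange multiplier (λ,μ) ∈ Λ(x*) such that dᵀ∇²ₓₓL(x*,λ,μ)d ≥ 0 for all d ∈ C(x*) (SSOC holds at x*). -/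

import Mathlib

open scoped BigOperators Pointwise
open Matrix

attribute [local instance] Classical.propDecidable

noncomputable section

/-- The gradient vector of `φ` at `x` (the vector of partial derivatives). -/
def gradVec {n : ℕ} (φ : (Fin n → ℝ) → ℝ) (x : Fin n → ℝ) : Fin n → ℝ :=
  fun k => fderiv ℝ φ x (Pi.single k 1)

/-- The quadratic form `d ↦ dᵀ ∇²φ(x) d` of the Hessian of `φ` at `x`. -/
def hessQ {n : ℕ} (φ : (Fin n → ℝ) → ℝ) (x d : Fin n → ℝ) : ℝ :=
  iteratedFDeriv ℝ 2 φ x ![d, d]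

/-- Feasibility for the problem (NLP). -/
def Feas {n m p : ℕ} (h : Fin m → (Fin n → ℝ) → ℝ) (g : Fin p → (Fin n → ℝ) → ℝ)
    (x : Fin n → ℝ) : Prop :=
  (∀ i, h i x = 0) ∧ ∀ j, g j x ≤ 0

/-- The Lagrangian of (NLP). -/
def Lagr {n m p : ℕ} (f : (Fin n → ℝ) → ℝ) (h : Fin m → (Fin n → ℝ) → ℝ)
    (g : Fin p → (Fin n → ℝ) → ℝ) (lam : Fin m → ℝ) (mu : Fin p → ℝ) (x : Fin n → ℝ) : ℝ :=
  f x + ∑ i, lam i * h i x + ∑ j, mu j * g j x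

/-- `(lam, mu)` is a Lagrange multiplier at `xs`, i.e. `(lam, mu) ∈ Λ(xs)`. -/
def IsLagMult {n m p : ℕ} (f : (Fin n → ℝ) → ℝ) (h : Fin m → (Fin n → ℝ) → ℝ)
    (g : Fin p → (Fin n → ℝ) → ℝ) (xs : Fin n → ℝ) (lam : Fin m → ℝ) (mu : Fin p → ℝ) : Prop :=
  (∀ j, 0 ≤ mu j) ∧ fderiv ℝ (Lagr f h g lam mu) xs = 0 ∧ ∀ j, mu j * g j xs = 0

/-- The Mangasarian-Fromovitz constraint qualification at `xs`. -/
def MFCQ {n m p : ℕ} (h : Fin m → (Fin n → ℝ) → ℝ) (g : Fin p → (Fin n → ℝ) → ℝ)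
    (xs : Fin n → ℝ) : Prop :=
  LinearIndependent ℝ (fun i : Fin m => fderiv ℝ (h i) xs) ∧
  ∃ d : Fin n → ℝ, (∀ i, fderiv ℝ (h i) xs d = 0) ∧
    ∀ j, g j xs = 0 → fderiv ℝ (g j) xs d < 0

/-- Membership in the critical cone `C(xs)`. -/
def critCone {n m p : ℕ} (f : (Fin n → ℝ) → ℝ) (h : Fin m → (Fin n → ℝ) → ℝ)
    (g : Fin p → (Fin n → ℝ) → ℝ) (xs d : Fin n → ℝ) : Prop :=
  fderiv ℝ f xs d = 0 ∧ (∀ i, fderiv ℝ (h i) xs d = 0) ∧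
    ∀ j, g j xs = 0 → fderiv ℝ (g j) xs d ≤ 0

/-- Membership in the critical subspace `S(xs)`. -/
def critSub {n m p : ℕ} (h : Fin m → (Fin n → ℝ) → ℝ) (g : Fin p → (Fin n → ℝ) → ℝ)
    (xs d : Fin n → ℝ) : Prop :=
  (∀ i, fderiv ℝ (h i) xs d = 0) ∧ ∀ j, g j xs = 0 → fderiv ℝ (g j) xs d = 0

/-- The Jacobian matrix `J(x)` of equality and active inequality constraints
(activity taken at the base point `xs`). -/
def Jac {n m p : ℕ} (h : Fin m → (Fin n → ℝ) → ℝ) (g : Fin p → (Fin n → ℝ) → ℝ)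
    (xs x : Fin n → ℝ) : Matrix (Fin m ⊕ {j : Fin p // g j xs = 0}) (Fin n) ℝ :=
  Matrix.of fun i k =>
    Sum.elim (fun i' => fderiv ℝ (h i') x (Pi.single k 1))
      (fun j' => fderiv ℝ (g j'.1) x (Pi.single k 1)) i

/-- A first-order cone: the (direct) sum of a linear subspace and a ray. -/
def IsFirstOrderCone {n : ℕ} (K : Set (Fin n → ℝ)) : Prop :=
  ∃ (W : Submodule ℝ (Fin n → ℝ)) (d0 : Fin n → ℝ),
    K = {x | ∃ w ∈ W, ∃ r : ℝ, 0 ≤ r ∧ x = w + r • d0}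

/-- The rank of a family of vectors: the dimension of its linear span. -/
def famRank {ι : Type*} {n : ℕ} (v : ι → (Fin n → ℝ)) : ℕ :=
  Module.finrank ℝ (Submodule.span ℝ (Set.range v))

/-- The smooth singular value decomposition assumption (Assumption 1 of the paper) for the
Jacobian `J(x)` near `xs`, stated via an enumeration `e` of the rows:
`J(x) = U(x) Σ(x) V(x)ᵀ` on a neighborhood of `xs`, with all entries differentiable there,
`Σ(x)` diagonal with vanishing diagonal entries beyond the rank of `J(x)`, and the columns
of `U(xs)` and of `V(xs)` non-zero and pairwise orthogonal. -/
def SmoothSVD {n m p : ℕ} (h : Fin m → (Fin n → ℝ) → ℝ) (g : Fin p → (Fin n → ℝ) → ℝ)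
    (xs : Fin n → ℝ)
    (e : (Fin m ⊕ {j : Fin p // g j xs = 0}) ≃
      Fin (m + Fintype.card {j : Fin p // g j xs = 0})) : Prop :=
  ∃ O ∈ nhds xs,
    ∃ (U : (Fin n → ℝ) →
        Matrix (Fin (m + Fintype.card {j : Fin p // g j xs = 0}))
          (Fin (m + Fintype.card {j : Fin p // g j xs = 0})) ℝ)
      (S : (Fin n → ℝ) →
        Matrix (Fin (m + Fintype.card {j : Fin p // g j xs = 0})) (Fin n) ℝ)
      (V : (Fin n → ℝ) → Matrix (Fin n) (Fin n) ℝ),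
      (∀ i j', DifferentiableOn ℝ (fun x => U x i j') O) ∧
      (∀ i k, DifferentiableOn ℝ (fun x => S x i k) O) ∧
      (∀ k k', DifferentiableOn ℝ (fun x => V x k k') O) ∧
      (∀ x ∈ O, ∀ i k, Jac h g xs x (e.symm i) k = (U x * S x * (V x)ᵀ) i k) ∧
      (∀ x ∈ O, ∀ (i : Fin (m + Fintype.card {j : Fin p // g j xs = 0})) (k : Fin n),
        (i : ℕ) ≠ (k : ℕ) → S x i k = 0) ∧
      (∀ x ∈ O, ∀ (i : Fin (m + Fintype.card {j : Fin p // g j xs = 0})) (k : Fin n),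
        (i : ℕ) = (k : ℕ) → (Jac h g xs x).rank ≤ (i : ℕ) → S x i k = 0) ∧
      (∀ a, (fun i => U xs i a) ≠ 0) ∧
      (∀ a b, a ≠ b → ∑ i, U xs i a * U xs i b = 0) ∧
      (∀ a, (fun k => V xs k a) ≠ 0) ∧
      (∀ a b, a ≠ b → ∑ k, V xs k a * V xs k b = 0)

/-- The generalized strict complementary slackness condition at `xs`: at most one active
index has zero multiplier for every Lagrange multiplier. -/
def GSCS {n m p : ℕ} (f : (Fin n → ℝ) → ℝ) (h : Fin m → (Fin n → ℝ) → ℝ)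
    (g : Fin p → (Fin n → ℝ) → ℝ) (xs : Fin n → ℝ) : Prop :=
  {j : Fin p | g j xs = 0 ∧
    ∀ (lam : Fin m → ℝ) (mu : Fin p → ℝ), IsLagMult f h g xs lam mu → mu j = 0}.Subsingleton


lemma aux_minimax {X D : Type*} [NormedAddCommGroup X] [NormedSpace ℝ X] (K : Set X)
    (hK : IsCompact K) (hKc : Convex ℝ K) (T : Set D) (q : D → X →L[ℝ] ℝ) (c : D → ℝ)
    (h0 : ∃ d ∈ T, ∀ η, q d η + c d = 0)
    (hadd : ∀ d1 ∈ T, ∀ d2 ∈ T, ∃ d ∈ T, ∀ η ∈ K, q d η + c d ≤ (q d1 η + c d1) + (q d2 η + c d2))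
    (hsc : ∀ d1 ∈ T, ∀ r : ℝ, 0 ≤ r → ∃ d ∈ T, ∀ η ∈ K, q d η + c d = r * (q d1 η + c d1))
    (H : ∀ d ∈ T, ∃ η ∈ K, 0 ≤ q d η + c d) :
    ∃ η ∈ K, ∀ d ∈ T, 0 ≤ q d η + c d := by
  classical
  have key : (K ∩ ⋂ i : T, {η | 0 ≤ q i.1 η + c i.1}).Nonempty := by
    apply hK.inter_iInter_nonempty
    · intro i
      exact isClosed_le continuous_const (by fun_prop)
    intro u
    by_contra hcon
    let Φ : X → (T → ℝ) := fun η i => q i.1 η + c i.1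
    let Ψ : X → (u → ℝ) := fun η i => q i.1.1 η + c i.1.1
    have hΨ : Continuous Ψ := by
      apply continuous_pi; intro i; show Continuous fun η => q i.1.1 η + c i.1.1; fun_prop
    have hconv : Convex ℝ (Ψ '' K) := by
      rintro _ ⟨a, ha, rfl⟩ _ ⟨b, hb, rfl⟩ s t hs ht hst
      refine ⟨s • a + t • b, hKc ha hb hs ht hst, ?_⟩
      funext i
      simp only [Ψ, map_add, map_smul, Pi.add_apply, Pi.smul_apply, smul_eq_mul]
      linear_combination (-(c i.1.1)) * hst
    obtain ⟨F, a, b, hFa, hab, hFb⟩ := geometric_hahn_banach_compact_closed hconv (hK.image hΨ)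
      (t := Set.Ici (0 : u → ℝ)) (convex_Ici 0) isClosed_Ici (by
        rw [Set.disjoint_left]
        rintro _ ⟨η, hη, rfl⟩ hmem
        apply hcon
        refine ⟨η, hη, ?_⟩
        simp only [Set.mem_iInter]
        intro i hi
        exact hmem ⟨i, hi⟩)
    have hb0 : b < 0 := by simpa using hFb 0 (by simp)
    have hFsum : ∀ y : u → ℝ, F y = ∑ i, y i * F (Pi.single i 1) := by
      intro y
      have : y = ∑ i, y i • (Pi.single i (1:ℝ) : u → ℝ) := by
        funext j
        simp [Finset.sum_apply, Pi.single_apply]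
      conv_lhs => rw [this]
      simp [map_sum]
    have hw : ∀ i, 0 ≤ F (Pi.single i 1) := by
      intro i
      by_contra hlt
      push Not at hlt
      have := hFb ((b / F (Pi.single i 1)) • Pi.single i (1:ℝ)) (by
        simp only [Set.mem_Ici]
        apply smul_nonneg (div_nonneg_of_nonpos hb0.le hlt.le)
        intro j; by_cases hj : j = i
        · subst hj; simp
        · simp [hj])
      rw [map_smul, smul_eq_mul, div_mul_cancel₀ _ hlt.ne] at this
      exact lt_irrefl _ this
    have hcomb : ∀ s : Finset u, ∃ d ∈ T, ∀ η ∈ K, q d η + c d ≤ ∑ i ∈ s, Ψ η i * F (Pi.single i 1) := by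
      intro s
      induction s using Finset.induction_on with
      | empty =>
        obtain ⟨d, hd, h⟩ := h0
        exact ⟨d, hd, fun η _ => by simp [h]⟩
      | insert i s hi ih =>
        obtain ⟨d2, hd2, h2⟩ := ih
        obtain ⟨d1, hd1, h1⟩ := hsc i.1.1 i.1.2 _ (hw i)
        obtain ⟨d, hd, h⟩ := hadd d1 hd1 d2 hd2
        refine ⟨d, hd, fun η hη => ?_⟩
        rw [Finset.sum_insert hi]
        have e1 := h1 η hη; have e2 := h2 η hη; have e3 := h η hη
        have : Ψ η i = q i.1.1 η + c i.1.1 := rfl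
        rw [this]; nlinarith
    obtain ⟨d, hd, h⟩ := hcomb Finset.univ
    obtain ⟨η, hη, hpos⟩ := H d hd
    have e1 := h η hη
    rw [← hFsum] at e1
    have := hFa (Ψ η) ⟨η, hη, rfl⟩
    linarith
  obtain ⟨η, hη, h⟩ := key
  refine ⟨η, hη, fun d hd => ?_⟩
  simp only [Set.mem_iInter] at h
  exact h ⟨d, hd⟩

/-- merging two directions, one of which lies in the kernel. -/
lemma aux_pair0 {E Y : Type*} [AddCommGroup E] [Module ℝ E] (K : Set Y) (T N : Submodule ℝ E)
    (hNT : N ≤ T)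
    (Q : Y → E →ₗ[ℝ] E →ₗ[ℝ] ℝ) (hsymm : ∀ η ∈ K, ∀ a b, Q η a b = Q η b a)
    (η0 : Y) (hη0 : η0 ∈ K) (ρ : Y → ℝ) (w l : E →ₗ[ℝ] ℝ)
    (hdiff : ∀ η ∈ K, ∀ d ∈ T, ∀ v ∈ N, Q η d v = Q η0 d v + ρ η * w d * l v)
    (H : ∀ d ∈ T, ∃ η ∈ K, 0 ≤ Q η d d) (d : E) (hd : d ∈ T) (v : E) (hv : v ∈ N) :
    ∃ z ∈ T, ∀ η ∈ K, Q η z z ≤ Q η d d + Q η v v := by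
  by_cases hwl : w v * l v = 0
  · refine ⟨d, hd, fun η hη => ?_⟩
    obtain ⟨η1, hη1, hp⟩ := H v (hNT hv)
    have e1 := hdiff η1 hη1 v (hNT hv) v hv
    have e2 := hdiff η hη v (hNT hv) v hv
    rw [mul_assoc, hwl, mul_zero, add_zero] at e1 e2
    linarith
  · have hw : w v ≠ 0 := left_ne_zero_of_mul hwl
    -- choose the root with the right sign
    have hroot : ∀ s : ℝ, ∃ τ : ℝ, τ ^ 2 + 2 * τ * (w d / w v) = 1 ∧ τ * s ≤ 0 := by
      intro s
      set a := w d / w v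
      have hsq : Real.sqrt (a ^ 2 + 1) ^ 2 = a ^ 2 + 1 := Real.sq_sqrt (by positivity)
      have hge : |a| ≤ Real.sqrt (a ^ 2 + 1) := Real.abs_le_sqrt (by linarith)
      have := abs_le.mp hge
      rcases le_total 0 s with hs | hs
      · exact ⟨-a - Real.sqrt (a^2+1), by nlinarith, by nlinarith⟩
      · exact ⟨-a + Real.sqrt (a^2+1), by nlinarith, by nlinarith⟩
    obtain ⟨τ, hτ, hs⟩ := hroot (Q η0 d v - (w d / w v) * Q η0 v v)
    refine ⟨d + τ • v, T.add_mem hd (T.smul_mem _ (hNT hv)), fun η hη => ?_⟩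
    have e1 := hdiff η hη v (hNT hv) v hv
    have e2 := hdiff η hη d hd v hv
    have e3 := hsymm η hη v d
    simp only [map_add, map_smul, LinearMap.add_apply, LinearMap.smul_apply, smul_eq_mul]
    rw [e3, e2, e1]
    have hwd : w d = (w d / w v) * w v := by field_simp
    set a := w d / w v
    rw [hwd]
    have : τ ^ 2 = 1 - 2 * τ * a := by linarith
    have h2 : τ * (τ * (Q η0 v v + ρ η * w v * l v)) =
      (1 - 2 * τ * a) * (Q η0 v v + ρ η * w v * l v) := by rw [← this]; ring
    linarith [h2, hs]

lemma aux_pair {E Y : Type*} [AddCommGroup E] [Module ℝ E] (K : Set Y) (T N : Submodule ℝ E)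
    (hNT : N ≤ T)
    (Q : Y → E →ₗ[ℝ] E →ₗ[ℝ] ℝ) (hsymm : ∀ η ∈ K, ∀ a b, Q η a b = Q η b a)
    (η0 : Y) (hη0 : η0 ∈ K) (ρ : Y → ℝ) (w l : E →ₗ[ℝ] ℝ)
    (hdiff : ∀ η ∈ K, ∀ d ∈ T, ∀ v ∈ N, Q η d v = Q η0 d v + ρ η * w d * l v)
    (H : ∀ d ∈ T, ∃ η ∈ K, 0 ≤ Q η d d)
    (xf : E →ₗ[ℝ] ℝ) (hxf : ∀ v ∈ T, xf v = 0 → v ∈ N) (d1 : E) (hd1 : d1 ∈ T) (d2 : E) (hd2 : d2 ∈ T) :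
    ∃ z ∈ T, ∀ η ∈ K, Q η z z ≤ Q η d1 d1 + Q η d2 d2 := by
  by_cases h2 : xf d2 = 0
  · exact aux_pair0 K T N hNT Q hsymm η0 hη0 ρ w l hdiff H d1 hd1 d2 (hxf d2 hd2 h2)
  · set R := Real.sqrt (xf d1 ^ 2 + xf d2 ^ 2)
    have hpos : 0 < xf d1 ^ 2 + xf d2 ^ 2 := by positivity
    have hR : R ^ 2 = xf d1 ^ 2 + xf d2 ^ 2 := Real.sq_sqrt hpos.le
    have hR0 : R ≠ 0 := (Real.sqrt_pos.mpr hpos).ne'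
    set c := xf d1 / R with hc
    set s := xf d2 / R with hs
    have hcs : c ^ 2 + s ^ 2 = 1 := by
      rw [hc, hs, div_pow, div_pow, ← add_div, hR, div_self hpos.ne']
    have hv : (-s) • d1 + c • d2 ∈ T := T.add_mem (T.smul_mem _ hd1) (T.smul_mem _ hd2)
    obtain ⟨z, hz, h⟩ := aux_pair0 K T N hNT Q hsymm η0 hη0 ρ w l hdiff H (c • d1 + s • d2)
      (T.add_mem (T.smul_mem _ hd1) (T.smul_mem _ hd2)) ((-s) • d1 + c • d2) (hxf _ hv (by
        simp [hc, hs]; ring))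
    refine ⟨z, hz, fun η hη => (h η hη).trans (le_of_eq ?_)⟩
    simp only [map_add, map_smul, LinearMap.add_apply, LinearMap.smul_apply, smul_eq_mul]
    rw [hsymm η hη d2 d1]
    linear_combination (Q η d1 d1 + Q η d2 d2) * hcs

lemma aux_surj {E ι : Type*} [NormedAddCommGroup E] [NormedSpace ℝ E] [Fintype ι]
    (A : ι → E →L[ℝ] ℝ) (hA : LinearIndependent ℝ A) :
    Function.Surjective (ContinuousLinearMap.pi A) := by
  classical
  by_contra hns
  have hlt : (ContinuousLinearMap.pi A).toLinearMap.range < ⊤ := by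
    rw [lt_top_iff_ne_top]
    intro h
    exact hns (LinearMap.range_eq_top.mp h)
  obtain ⟨F, hF0, hF⟩ := Submodule.exists_le_ker_of_lt_top _ hlt
  have hFsum : ∀ y : ι → ℝ, F y = ∑ i, y i * F (Pi.single i 1) := by
    intro y
    have : y = ∑ i, y i • (Pi.single i (1:ℝ) : ι → ℝ) := by
      funext j
      simp [Finset.sum_apply, Pi.single_apply]
    conv_lhs => rw [this]
    simp [map_sum]
  have hz : ∑ i, F (Pi.single i 1) • A i = 0 := by
    ext z
    have : F (fun i => A i z) = 0 := hF ⟨z, rfl⟩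
    rw [hFsum] at this
    simpa [_root_.sum_apply, mul_comm] using this
  have := Fintype.linearIndependent_iff.mp hA _ hz
  apply hF0
  ext y
  rw [LinearMap.comp_apply]
  simp [this]

lemma aux_motzkin {E ι κ : Type*} [NormedAddCommGroup E] [NormedSpace ℝ E] [CompleteSpace E]
    [Fintype ι] [Fintype κ]
    (A : ι → E →L[ℝ] ℝ) (hA : LinearIndependent ℝ A) (a : ι → ℝ) (B : κ → E →L[ℝ] ℝ) (b : κ → ℝ)
    (hno : ¬ ∃ z, (∀ i, A i z + a i = 0) ∧ ∀ k, B k z + b k < 0) :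
    ∃ (lam : ι → ℝ) (mu : κ → ℝ), (∀ k, 0 ≤ mu k) ∧ mu ≠ 0 ∧
      (∀ z, ∑ i, lam i * A i z + ∑ k, mu k * B k z = 0) ∧
      0 ≤ ∑ i, lam i * a i + ∑ k, mu k * b k := by
  classical
  let L : (E × (κ → ℝ)) →L[ℝ] ((ι → ℝ) × (κ → ℝ)) :=
    (ContinuousLinearMap.pi A ∘L ContinuousLinearMap.fst ℝ E (κ → ℝ)).prod
      (ContinuousLinearMap.pi B ∘L ContinuousLinearMap.fst ℝ E (κ → ℝ) +
        ContinuousLinearMap.snd ℝ E (κ → ℝ))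
  have hLapp : ∀ z s, L (z, s) = (fun i => A i z, fun k => B k z + s k) := fun z s => rfl
  have hL : Function.Surjective L := by
    rintro ⟨y, s⟩
    obtain ⟨z, hz⟩ := aux_surj A hA y
    refine ⟨(z, fun k => s k - B k z), ?_⟩
    rw [hLapp]
    refine Prod.ext ?_ ?_
    · exact hz
    · funext k; simp
  let P : Set (E × (κ → ℝ)) := {zs | ∀ k, 0 < zs.2 k}
  have hP : IsOpen P := by
    have : P = ⋂ k, {zs : E × (κ → ℝ) | 0 < zs.2 k} := by ext; simp [P]
    rw [this]
    exact isOpen_iInter_of_finite fun k => isOpen_lt continuous_const (by fun_prop)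
  have hPc : Convex ℝ P := by
    rintro x hx y hy s t hs ht hst k
    have h1 := hx k; have h2 := hy k
    simp only [Prod.snd_add, Prod.smul_snd, Pi.add_apply, Pi.smul_apply, smul_eq_mul]
    rcases hs.eq_or_lt with h | h
    · subst h; simp at hst; subst hst; simpa using h2
    · have := mul_pos h h1; have := mul_nonneg ht h2.le; linarith
  have hLo : IsOpen (L '' P) := L.isOpenMap hL P hP
  have hLc : Convex ℝ (L '' P) := hPc.linear_image L.toLinearMap
  obtain ⟨F, hF⟩ := geometric_hahn_banach_point_open (x := ((fun i => - a i, fun k => - b k) : (ι → ℝ) × (κ → ℝ)))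
    hLc hLo (by
      rintro ⟨⟨z, s⟩, hs, hzs⟩
      apply hno
      rw [hLapp, Prod.mk.injEq] at hzs
      refine ⟨z, fun i => ?_, fun k => ?_⟩
      · have := congrFun hzs.1 i; linarith
      · have := congrFun hzs.2 k; have h3 : 0 < s k := hs k; linarith)
  let lam : ι → ℝ := fun i => F (Pi.single i 1, 0)
  let mu : κ → ℝ := fun k => F (0, Pi.single k 1)
  have hFsum : ∀ (y : ι → ℝ) (s : κ → ℝ), F (y, s) = ∑ i, lam i * y i + ∑ k, mu k * s k := by
    intro y s
    have : (y, s) = ∑ i, y i • ((Pi.single i (1:ℝ) : ι → ℝ), (0 : κ → ℝ)) +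
        ∑ k, s k • ((0 : ι → ℝ), (Pi.single k (1:ℝ) : κ → ℝ)) := by
      refine Prod.ext ?_ ?_
      · funext j; simp [Prod.fst_sum, Finset.sum_apply, Pi.single_apply]
      · funext j; simp [Prod.snd_sum, Finset.sum_apply, Pi.single_apply]
    rw [this, map_add, map_sum, map_sum]
    simp only [map_smul, smul_eq_mul, lam, mu]
    congr 1 <;> exact Finset.sum_congr rfl fun _ _ => mul_comm _ _
  have hmain : ∀ z (s : κ → ℝ), (∀ k, 0 < s k) → 
      0 < (∑ i, lam i * A i z + ∑ k, mu k * B k z) + ∑ k, mu k * s k + (∑ i, lam i * a i + ∑ k, mu k * b k) := by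
    intro z s hs
    have := hF _ ⟨(z, s), hs, rfl⟩
    rw [hLapp, hFsum, hFsum] at this
    simp only [mul_neg, Finset.sum_neg_distrib, mul_add, Finset.sum_add_distrib] at this
    linarith
  set C := ∑ i, lam i * a i + ∑ k, mu k * b k with hC
  have hmu : ∀ k, 0 ≤ mu k := by
    intro k
    by_contra hk
    push Not at hk
    set M := ∑ j, mu j + C with hM
    have := hmain 0 (fun j => 1 + if j = k then (|M| / (- mu k)) else 0) (by
      intro j; have : 0 ≤ |M| / (- mu k) := by apply div_nonneg (abs_nonneg _); linarith
      split_ifs <;> linarith)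
    simp [mul_add, Finset.sum_add_distrib] at this
    have e : mu k * (|M| / -mu k) = - |M| := by field_simp [hk.ne]
    simp only [div_eq_mul_inv] at this e
    rw [e] at this
    have := neg_abs_le M
    have := le_abs_self M
    linarith
  have hlin : ∀ z, ∑ i, lam i * A i z + ∑ k, mu k * B k z = 0 := by
    intro z
    set t := ∑ i, lam i * A i z + ∑ k, mu k * B k z with ht
    by_contra hne
    set M := ∑ j, mu j + C with hM
    have := hmain ((-(M) / t) • z) (fun _ => 1) (by simp)
    have e : ∑ i, lam i * A i ((-(M) / t) • z) + ∑ k, mu k * B k ((-(M) / t) • z) = (-M / t) * t := by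
      rw [ht, mul_add, Finset.mul_sum, Finset.mul_sum]
      congr 1 <;> · apply Finset.sum_congr rfl; intros; simp; ring
    rw [e, div_mul_cancel₀ _ hne] at this
    simp at this
    linarith
  refine ⟨lam, mu, hmu, ?_, hlin, ?_⟩
  · intro h0
    have h1 : ∑ i, lam i • A i = 0 := by
      ext z
      have := hlin z
      simpa [h0, _root_.sum_apply] using this
    have h2 := Fintype.linearIndependent_iff.mp hA _ h1
    have := hmain 0 (fun _ => 1) (by simp)
    simp [hC, h0, h2] at this
  · rw [← hC]
    by_contra hneg
    push Not at hneg
    have hS : 0 ≤ ∑ k, mu k := Finset.sum_nonneg fun k _ => hmu k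
    have := hmain 0 (fun _ => (-C) / (∑ k, mu k + 1)) (by intro _; apply div_pos <;> linarith)
    simp [← Finset.sum_mul] at this
    have e : (∑ k, mu k) * (-C / (∑ k, mu k + 1)) ≤ -C := by
      rw [mul_div_assoc', div_le_iff₀ (by linarith)]
      nlinarith
    linarith

open Filter Topology Asymptotics

lemma aux_symm {n : ℕ} (φ : (Fin n → ℝ) → ℝ) (hφ : ContDiff ℝ 2 φ) (x a b : Fin n → ℝ) :
    fderiv ℝ (fderiv ℝ φ) x a b = fderiv ℝ (fderiv ℝ φ) x b a :=
  (hφ.contDiffAt.isSymmSndFDerivAt (by simp)) a b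

lemma aux_diff2 {n : ℕ} (φ : (Fin n → ℝ) → ℝ) (hφ : ContDiff ℝ 2 φ) :
    Differentiable ℝ (fderiv ℝ φ) :=
  (hφ.fderiv_right (m := 1) (by norm_num)).differentiable (by norm_num)

lemma aux_taylor {n : ℕ} (φ : (Fin n → ℝ) → ℝ) (hφ : ContDiff ℝ 2 φ) (x : Fin n → ℝ) :
    (fun y => φ (x + y) - φ x - fderiv ℝ φ x y - (1/2) * fderiv ℝ (fderiv ℝ φ) x y y)
      =o[𝓝 0] fun y => ‖y‖ ^ 2 := by
  set D := fderiv ℝ (fderiv ℝ φ) x with hD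
  have hd1 : Differentiable ℝ φ := hφ.differentiable (by norm_num)
  have hR : ∀ y, HasFDerivAt (fun y => φ (x + y) - φ x - fderiv ℝ φ x y - (1/2) * D y y)
      (fderiv ℝ φ (x + y) - fderiv ℝ φ x - D y) y := by
    intro y
    have h1 : HasFDerivAt (fun y => φ (x + y)) (fderiv ℝ φ (x + y)) y := by
      have := (hd1 (x + y)).hasFDerivAt
      have h5 : HasFDerivAt (fun y => x + y) (ContinuousLinearMap.id ℝ (Fin n → ℝ)) y :=
        (hasFDerivAt_id y).const_add x
      exact this.comp y h5
    have h2 : HasFDerivAt (fun y => fderiv ℝ φ x y) (fderiv ℝ φ x) y :=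
      (fderiv ℝ φ x).hasFDerivAt
    have h3 : HasFDerivAt (fun y => D y y) _ y := (D.hasFDerivAt (x := y)).clm_apply (hasFDerivAt_id y)
    have h4 := ((h1.sub_const (φ x)).sub h2).sub (h3.const_mul (1/2))
    refine h4.congr_fderiv ?_
    ext v
    simp
    have : D v y = D y v := aux_symm φ hφ x v y
    rw [this]; ring
  have hd2 := ((aux_diff2 φ hφ) x).hasFDerivAt.isLittleO
  rw [← hD] at hd2
  rw [isLittleO_iff] at hd2 ⊢
  intro ε hε
  have := hd2 hε
  rw [Metric.eventually_nhds_iff] at this ⊢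
  obtain ⟨δ, hδ, hb⟩ := this
  refine ⟨δ, hδ, fun y hy => ?_⟩
  have hy' : ‖y‖ < δ := by simpa using hy
  have := Convex.norm_image_sub_le_of_norm_hasFDerivWithin_le (𝕜 := ℝ)
    (s := Metric.closedBall (0 : Fin n → ℝ) ‖y‖) (x := 0) (y := y) (C := ε * ‖y‖)
    (fun v _ => (hR v).hasFDerivWithinAt) (by
      intro v hv
      have hv' : ‖v‖ ≤ ‖y‖ := by simpa using hv
      have := hb (y := x + v) (by simpa using lt_of_le_of_lt hv' hy')
      simp only [add_sub_cancel_left] at this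
      exact this.trans (by gcongr)) (convex_closedBall _ _) (by simp) (by simp)
  simp only [map_zero, add_zero, sub_self, sub_zero, mul_zero] at this
  refine this.trans (le_of_eq ?_)
  simp; ring

lemma aux_curve {n : ℕ} (φ : (Fin n → ℝ) → ℝ) (hφ : ContDiff ℝ 2 φ) (x d z : Fin n → ℝ)
    (u : ℝ → Fin n → ℝ)
    (hu : Tendsto (fun t => (t ^ 2)⁻¹ • (u t - t • d)) (𝓝[>] 0) (𝓝 z)) :
    Tendsto (fun t => (t ^ 2)⁻¹ * (φ (x + u t) - φ x - t * fderiv ℝ φ x d)) (𝓝[>] 0)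
      (𝓝 (fderiv ℝ φ x z + (1/2) * fderiv ℝ (fderiv ℝ φ) x d d)) := by
  have hpos : ∀ᶠ t : ℝ in 𝓝[>] 0, 0 < t := eventually_mem_nhdsWithin
  have ht0 : Tendsto (fun t : ℝ => t) (𝓝[>] 0) (𝓝 0) := tendsto_nhdsWithin_of_tendsto_nhds tendsto_id
  have hv : Tendsto (fun t => t⁻¹ • u t) (𝓝[>] 0) (𝓝 d) := by
    have h1 := (ht0.smul hu).add_const d
    rw [zero_smul, zero_add] at h1
    refine h1.congr' ?_
    filter_upwards [hpos] with t ht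
    rw [smul_smul, smul_sub, smul_smul]
    have e1 : t * (t ^ 2)⁻¹ = t⁻¹ := by field_simp
    rw [e1, inv_mul_cancel₀ ht.ne', one_smul, sub_add_cancel]
  have hu0 : Tendsto u (𝓝[>] 0) (𝓝 0) := by
    have h1 := ht0.smul hv
    rw [zero_smul] at h1
    refine h1.congr' ?_
    filter_upwards [hpos] with t ht
    rw [smul_smul, mul_inv_cancel₀ ht.ne', one_smul]
  have hO : (fun t => ‖u t‖ ^ 2) =O[𝓝[>] 0] fun t : ℝ => t ^ 2 := by
    have : u =O[𝓝[>] 0] fun t : ℝ => t := by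
      have h1 : (fun t => t⁻¹ • u t) =O[𝓝[>] 0] fun _ : ℝ => (1 : ℝ) := hv.isBigO_one ℝ
      have h2 := (isBigO_refl (fun t : ℝ => t) (𝓝[>] 0)).smul h1
      refine (h2.congr' ?_ ?_)
      · filter_upwards [hpos] with t ht
        rw [smul_smul, mul_inv_cancel₀ ht.ne', one_smul]
      · filter_upwards with t; simp
    exact this.norm_left.pow 2
  have hR := ((aux_taylor φ hφ x).comp_tendsto hu0).trans_isBigO hO
  have hR' := hR.tendsto_div_nhds_zero
  have hA : Tendsto (fun t => fderiv ℝ φ x ((t ^ 2)⁻¹ • (u t - t • d))) (𝓝[>] 0) (𝓝 (fderiv ℝ φ x z)) :=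
    ((fderiv ℝ φ x).continuous.tendsto z).comp hu
  have hB : Tendsto (fun t => (1/2) * fderiv ℝ (fderiv ℝ φ) x (t⁻¹ • u t) (t⁻¹ • u t)) (𝓝[>] 0)
      (𝓝 ((1/2) * fderiv ℝ (fderiv ℝ φ) x d d)) := by
    have hc : Continuous fun v => (1/2 : ℝ) * fderiv ℝ (fderiv ℝ φ) x v v := by fun_prop
    exact (hc.tendsto d).comp hv
  have := (hR'.add hA).add hB
  rw [zero_add] at this
  refine this.congr' ?_
  filter_upwards [hpos] with t ht
  simp only [Function.comp, map_smul, map_sub, smul_eq_mul, _root_.smul_apply]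
  field_simp
  ring

lemma aux_graves {n m : ℕ} (h : Fin m → (Fin n → ℝ) → ℝ) (hh : ∀ i, ContDiff ℝ 2 (h i))
    (x : Fin n → ℝ) (hx : ∀ i, h i x = 0)
    (hli : LinearIndependent ℝ (fun i : Fin m => fderiv ℝ (h i) x)) :
    ∃ (G : (Fin n → ℝ) → (Fin n → ℝ)) (C : ℝ), ∀ᶠ y in 𝓝 x,
      (∀ i, h i (G y) = 0) ∧ ‖G y - y‖ ≤ C * ‖fun i => h i y‖ := by
  set H : (Fin n → ℝ) → (Fin m → ℝ) := fun y i => h i y with hH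
  set A := ContinuousLinearMap.pi (fun i : Fin m => fderiv ℝ (h i) x) with hA
  have hstrict : HasStrictFDerivAt H A x :=
    hasStrictFDerivAt_pi' |>.mpr fun i => by
      have := (hh i).contDiffAt.hasStrictFDerivAt (x := x) (by norm_num)
      exact this
  have hsurj : A.range = ⊤ := LinearMap.range_eq_top.mpr (aux_surj _ hli)
  set S := A.nonlinearRightInverseOfSurjective hsurj with hS
  have hSpos : 0 < S.nnnorm := A.nonlinearRightInverseOfSurjective_nnnorm_pos hsurj
  set c : NNReal := S.nnnorm⁻¹ / 2 with hc
  have hcpos : 0 < c := half_pos (inv_pos.2 hSpos)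
  obtain ⟨s, hs, happ⟩ := hstrict.approximates_deriv_on_nhds (Or.inr hcpos)
  obtain ⟨δ, hδ, hball⟩ := Metric.mem_nhds_iff.mp hs
  have hHc : Continuous H := continuous_pi fun i => (hh i).continuous
  have hgood : ∀ᶠ y in 𝓝 x, ∃ w, H w = 0 ∧ ‖w - y‖ ≤ 2 * S.nnnorm * ‖H y‖ := by
    have h1 : ∀ᶠ y in 𝓝 x, dist y x < δ / 2 := Metric.ball_mem_nhds x (half_pos hδ)
    have h2 : ∀ᶠ y in 𝓝 x, 2 * S.nnnorm * ‖H y‖ < δ / 2 := by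
      have : Tendsto (fun y => 2 * (S.nnnorm : ℝ) * ‖H y‖) (𝓝 x) (𝓝 (2 * (S.nnnorm : ℝ) * ‖H x‖)) :=
        (by fun_prop : Continuous fun y => 2 * (S.nnnorm : ℝ) * ‖H y‖).tendsto x
      have hHx : H x = 0 := funext hx
      rw [hHx, norm_zero, mul_zero] at this
      exact this.eventually_lt_const (half_pos hδ)
    filter_upwards [h1, h2] with y hy1 hy2
    have hsub : Metric.closedBall y (2 * S.nnnorm * ‖H y‖) ⊆ s := by
      refine subset_trans (fun w hw => ?_) hball
      have : dist w y ≤ 2 * S.nnnorm * ‖H y‖ := hw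
      rw [Metric.mem_ball]
      linarith [dist_triangle w y x]
    have hso := happ.surjOn_closedBall_of_nonlinearRightInverse S (by positivity) hsub
    have h0 : (0 : Fin m → ℝ) ∈ Metric.closedBall (H y)
        (((S.nnnorm : ℝ)⁻¹ - c) * (2 * S.nnnorm * ‖H y‖)) := by
      rw [Metric.mem_closedBall, dist_zero_left]
      apply le_of_eq
      have : (S.nnnorm : ℝ) ≠ 0 := by exact_mod_cast hSpos.ne'
      rw [hc]; push_cast; field_simp; ring
    obtain ⟨w, hw, hw0⟩ := hso h0
    exact ⟨w, hw0, by rw [← dist_eq_norm]; exact hw⟩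
  classical
  refine ⟨fun y => if hy : ∃ w, H w = 0 ∧ ‖w - y‖ ≤ 2 * S.nnnorm * ‖H y‖ then hy.choose else 0,
    2 * S.nnnorm, ?_⟩
  filter_upwards [hgood] with y hy
  rw [dif_pos hy]
  exact ⟨fun i => congrFun hy.choose_spec.1 i, hy.choose_spec.2⟩

lemma aux_sumsub {p : ℕ} (P : Fin p → Prop) [inst : Fintype {j // P j}] (F : Fin p → ℝ)
    (h0 : ∀ j, ¬ P j → F j = 0) :
    ∑ j : {j // P j}, F j = ∑ j, F j := by
  rw [← Fintype.sum_subtype_add_sum_subtype P F]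
  have : ∑ i : {x // ¬ P x}, F i = 0 := Finset.sum_eq_zero fun i _ => h0 i.1 i.2
  rw [this, add_zero]
  congr!

lemma aux_fderivLagr {n m p : ℕ} (f : (Fin n → ℝ) → ℝ) (h : Fin m → (Fin n → ℝ) → ℝ)
    (g : Fin p → (Fin n → ℝ) → ℝ)
    (hf : ContDiff ℝ 2 f) (hh : ∀ i, ContDiff ℝ 2 (h i)) (hg : ∀ j, ContDiff ℝ 2 (g j))
    (lam : Fin m → ℝ) (mu : Fin p → ℝ) (x : Fin n → ℝ) :
    fderiv ℝ (Lagr f h g lam mu) x = fderiv ℝ f x + ∑ i, lam i • fderiv ℝ (h i) x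
      + ∑ j, mu j • fderiv ℝ (g j) x := by
  have h1 : HasFDerivAt f (fderiv ℝ f x) x := (hf.differentiable (by norm_num) x).hasFDerivAt
  have h2 : ∀ i, HasFDerivAt (h i) (fderiv ℝ (h i) x) x := fun i =>
    ((hh i).differentiable (by norm_num) x).hasFDerivAt
  have h3 : ∀ i, HasFDerivAt (g i) (fderiv ℝ (g i) x) x := fun i =>
    ((hg i).differentiable (by norm_num) x).hasFDerivAt
  exact ((h1.add (HasFDerivAt.fun_sum fun i _ => (h2 i).const_mul (lam i))).add
    (HasFDerivAt.fun_sum fun j _ => (h3 j).const_mul (mu j))).fderiv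

/-- the Hessian of the Lagrangian as an explicit expression -/
lemma aux_hess {n m p : ℕ} (f : (Fin n → ℝ) → ℝ) (h : Fin m → (Fin n → ℝ) → ℝ)
    (g : Fin p → (Fin n → ℝ) → ℝ)
    (hf : ContDiff ℝ 2 f) (hh : ∀ i, ContDiff ℝ 2 (h i)) (hg : ∀ j, ContDiff ℝ 2 (g j))
    (lam : Fin m → ℝ) (mu : Fin p → ℝ) (x d : Fin n → ℝ) :
    hessQ (Lagr f h g lam mu) x d = fderiv ℝ (fderiv ℝ f) x d d
      + ∑ i, lam i * fderiv ℝ (fderiv ℝ (h i)) x d d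
      + ∑ j, mu j * fderiv ℝ (fderiv ℝ (g j)) x d d := by
  have e : fderiv ℝ (Lagr f h g lam mu) = fun x => fderiv ℝ f x + ∑ i, lam i • fderiv ℝ (h i) x
      + ∑ j, mu j • fderiv ℝ (g j) x := funext fun x => aux_fderivLagr f h g hf hh hg lam mu x
  have h1 := (aux_diff2 f hf x).hasFDerivAt
  have h2 := fun i => (aux_diff2 (h i) (hh i) x).hasFDerivAt
  have h3 := fun i => (aux_diff2 (g i) (hg i) x).hasFDerivAt
  have := ((h1.add (HasFDerivAt.fun_sum (u := Finset.univ) fun i _ => (h2 i).const_smul (lam i))).add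
    (HasFDerivAt.fun_sum (u := Finset.univ) fun j _ => (h3 j).const_smul (mu j))).fderiv
  unfold hessQ
  rw [iteratedFDeriv_two_apply, e]
  have e2 : fderiv ℝ (fun x => fderiv ℝ f x + ∑ i, lam i • fderiv ℝ (h i) x
      + ∑ j, mu j • fderiv ℝ (g j) x) x = _ := this
  rw [e2]
  simp [_root_.sum_apply]

lemma aux_lagmult_iff {n m p : ℕ} (f : (Fin n → ℝ) → ℝ) (h : Fin m → (Fin n → ℝ) → ℝ)
    (g : Fin p → (Fin n → ℝ) → ℝ)
    (hf : ContDiff ℝ 2 f) (hh : ∀ i, ContDiff ℝ 2 (h i)) (hg : ∀ j, ContDiff ℝ 2 (g j))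
    (lam : Fin m → ℝ) (mu : Fin p → ℝ) (x : Fin n → ℝ) :
    IsLagMult f h g x lam mu ↔ (∀ j, 0 ≤ mu j) ∧ (∀ z, fderiv ℝ f x z + ∑ i, lam i * fderiv ℝ (h i) x z
      + ∑ j, mu j * fderiv ℝ (g j) x z = 0) ∧ ∀ j, mu j * g j x = 0 := by
  unfold IsLagMult
  rw [aux_fderivLagr f h g hf hh hg, ContinuousLinearMap.ext_iff]
  simp [_root_.sum_apply]

lemma aux_soc {n m p : ℕ} (f : (Fin n → ℝ) → ℝ) (h : Fin m → (Fin n → ℝ) → ℝ)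
    (g : Fin p → (Fin n → ℝ) → ℝ)
    (hf : ContDiff ℝ 2 f) (hh : ∀ i, ContDiff ℝ 2 (h i)) (hg : ∀ j, ContDiff ℝ 2 (g j))
    (xs : Fin n → ℝ) (hfeas : Feas h g xs)
    (hmin : IsLocalMinOn f {x | Feas h g x} xs)
    (hmfcq : MFCQ h g xs) (d : Fin n → ℝ) (hd : critCone f h g xs d) :
    ∃ (lam : Fin m → ℝ) (mu : Fin p → ℝ), IsLagMult f h g xs lam mu ∧
      0 ≤ fderiv ℝ (fderiv ℝ f) xs d d
      + ∑ i, lam i * fderiv ℝ (fderiv ℝ (h i)) xs d d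
      + ∑ j, mu j * fderiv ℝ (fderiv ℝ (g j)) xs d d := by
  obtain ⟨hli, dh, hdh1, hdh2⟩ := hmfcq
  obtain ⟨hd1, hd2, hd3⟩ := hd
  let P : Fin p → Prop := fun j => g j xs = 0 ∧ fderiv ℝ (g j) xs d = 0
  let B : Option {j // P j} → (Fin n → ℝ) →L[ℝ] ℝ := fun k =>
    k.elim (fderiv ℝ f xs) (fun j => fderiv ℝ (g j) xs)
  let b : Option {j // P j} → ℝ := fun k =>
    k.elim ((1/2) * fderiv ℝ (fderiv ℝ f) xs d d) (fun j => (1/2) * fderiv ℝ (fderiv ℝ (g j)) xs d d)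
  obtain ⟨lam, mu, hmu, hmu0, hlin, hpos⟩ := aux_motzkin (fun i => fderiv ℝ (h i) xs) hli
    (fun i => (1/2) * fderiv ℝ (fderiv ℝ (h i)) xs d d) B b (by
    rintro ⟨z, hz1, hz2⟩
    obtain ⟨G, C, hG⟩ := aux_graves h hh xs hfeas.1 hli
    have hposi : ∀ᶠ t : ℝ in 𝓝[>] 0, 0 < t := eventually_mem_nhdsWithin
    have ht0 : Tendsto (fun t : ℝ => t) (𝓝[>] 0) (𝓝 0) :=
      tendsto_nhdsWithin_of_tendsto_nhds tendsto_id
    let y : ℝ → Fin n → ℝ := fun t => t • d + (t ^ 2) • z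
    have hy : Tendsto (fun t => (t ^ 2)⁻¹ • (y t - t • d)) (𝓝[>] 0) (𝓝 z) := by
      refine tendsto_const_nhds.congr' ?_
      filter_upwards [hposi] with t ht
      simp only [y, add_sub_cancel_left, smul_smul]
      rw [inv_mul_cancel₀ (by positivity), one_smul]
    have hy0 : Tendsto (fun t => xs + y t) (𝓝[>] 0) (𝓝 xs) := by
      have : Continuous fun t : ℝ => xs + y t := by simp only [y]; fun_prop
      have h2 := (this.tendsto 0).mono_left (nhdsWithin_le_nhds (s := Set.Ioi 0))
      simpa [y] using h2
    have hHy : Tendsto (fun t => (t ^ 2)⁻¹ • (fun i => h i (xs + y t))) (𝓝[>] 0) (𝓝 0) := by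
      rw [tendsto_pi_nhds]
      intro i
      have := aux_curve (h i) (hh i) xs d z y hy
      simp only [hd2 i, hfeas.1 i, mul_zero, sub_zero, hz1 i] at this
      exact this
    let u : ℝ → Fin n → ℝ := fun t => G (xs + y t) - xs
    have hGy := hy0.eventually hG
    have hu : Tendsto (fun t => (t ^ 2)⁻¹ • (u t - t • d)) (𝓝[>] 0) (𝓝 z) := by
      have h1 : Tendsto (fun t => (t ^ 2)⁻¹ • (G (xs + y t) - (xs + y t))) (𝓝[>] 0) (𝓝 0) := by
        have h2 := hHy.norm.const_mul C
        rw [norm_zero, mul_zero] at h2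
        refine squeeze_zero_norm' ?_ h2
        filter_upwards [hposi, hGy] with t ht hGt
        rw [norm_smul, norm_smul]
        have := mul_le_mul_of_nonneg_left hGt.2 (norm_nonneg ((t ^ 2)⁻¹))
        linarith
      have h3 := h1.add hy
      rw [zero_add] at h3
      refine h3.congr fun t => ?_
      rw [← smul_add]; congr 1; simp only [u]; abel
    have hu0 : Tendsto (fun t => xs + u t) (𝓝[>] 0) (𝓝 xs) := by
      have h1 := ((ht0.pow 2).smul hu).add (ht0.smul_const d)
      rw [zero_smul, zero_pow two_ne_zero, zero_smul, add_zero] at h1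
      have h2 := h1.const_add xs
      rw [add_zero] at h2
      refine h2.congr' ?_
      filter_upwards [hposi] with t ht
      rw [smul_smul, mul_inv_cancel₀ (by positivity), one_smul, sub_add_cancel]
    have hGu : ∀ t, xs + u t = G (xs + y t) := fun t => by simp only [u]; abel
    have hg' : ∀ j, ∀ᶠ t in 𝓝[>] (0:ℝ), g j (xs + u t) ≤ 0 := by
      intro j
      by_cases hact : g j xs = 0
      · by_cases hdj : fderiv ℝ (g j) xs d = 0
        · have h1 := aux_curve (g j) (hg j) xs d z u hu
          simp only [hact, hdj, mul_zero, sub_zero] at h1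
          have h2 : fderiv ℝ (g j) xs z + (1/2) * fderiv ℝ (fderiv ℝ (g j)) xs d d < 0 :=
            hz2 (some ⟨j, hact, hdj⟩)
          filter_upwards [h1.eventually_lt_const h2, hposi] with t ht1 ht2
          have h3 : (0:ℝ) < (t ^ 2)⁻¹ := by positivity
          by_contra hc
          push Not at hc
          have := mul_pos h3 hc
          linarith
        · have hneg : fderiv ℝ (g j) xs d < 0 := lt_of_le_of_ne (hd3 j hact) hdj
          have h1 := aux_curve (g j) (hg j) xs d z u hu
          have h4 := (ht0.mul h1).add_const (fderiv ℝ (g j) xs d)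
          rw [zero_mul, zero_add] at h4
          filter_upwards [h4.eventually_lt_const hneg, hposi] with t ht1 ht2
          rw [hact] at ht1
          have e : t * ((t ^ 2)⁻¹ * (g j (xs + u t) - 0 - t * fderiv ℝ (g j) xs d)) +
            fderiv ℝ (g j) xs d = t⁻¹ * g j (xs + u t) := by field_simp; ring
          rw [e] at ht1
          by_contra hc
          push Not at hc
          have := mul_pos (inv_pos.mpr ht2) hc
          linarith
      · have hneg : g j xs < 0 := lt_of_le_of_ne (hfeas.2 j) hact
        have h1 := ((hg j).continuous.tendsto xs).comp hu0
        filter_upwards [h1.eventually_lt_const hneg] with t ht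
        exact ht.le
    have hfdec : ∀ᶠ t in 𝓝[>] (0:ℝ), f (xs + u t) < f xs := by
      have h1 := aux_curve f hf xs d z u hu
      simp only [hd1, mul_zero, sub_zero] at h1
      have h2 : fderiv ℝ f xs z + (1/2) * fderiv ℝ (fderiv ℝ f) xs d d < 0 := hz2 none
      filter_upwards [h1.eventually_lt_const h2, hposi] with t ht1 ht2
      have h3 : (0:ℝ) < (t ^ 2)⁻¹ := by positivity
      by_contra hc
      push Not at hc
      have := mul_nonneg h3.le (sub_nonneg.mpr hc)
      linarith
    have hfe : ∀ᶠ t in 𝓝[>] (0:ℝ), Feas h g (xs + u t) := by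
      filter_upwards [eventually_all.mpr hg', hGy] with t ht1 ht2
      exact ⟨fun i => by rw [hGu]; exact ht2.1 i, ht1⟩
    have hmn : ∀ᶠ t in 𝓝[>] (0:ℝ), Feas h g (xs + u t) → f xs ≤ f (xs + u t) := by
      have : ∀ᶠ x in 𝓝 xs, x ∈ {x | Feas h g x} → f xs ≤ f x := eventually_nhdsWithin_iff.mp hmin
      exact hu0.eventually this
    obtain ⟨t, h1, h2, h3⟩ := (hfdec.and (hfe.and hmn)).exists
    exact absurd (h3 h2) (not_le.mpr h1))
  rw [Fintype.sum_option] at hpos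
  simp only [Fintype.sum_option] at hlin
  have hm0 : 0 < mu none := by
    refine lt_of_le_of_ne (hmu none) fun h0 => hmu0 ?_
    have h1 := hlin dh
    rw [← h0] at h1
    simp only [hdh1, mul_zero, Finset.sum_const_zero, zero_mul, zero_add] at h1
    have h2 : ∀ j ∈ (Finset.univ : Finset {j // P j}), mu (some j) * B (some j) dh ≤ 0 := fun j _ =>
      mul_nonpos_of_nonneg_of_nonpos (hmu _) (hdh2 j.1 j.2.1).le
    have h3 := (Finset.sum_eq_zero_iff_of_nonpos h2).mp h1
    funext k
    cases k with
    | none => exact h0.symm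
    | some j =>
      have := h3 j (Finset.mem_univ _)
      exact (mul_eq_zero.mp this).resolve_right (hdh2 j.1 j.2.1).ne
  set M := mu none with hM
  let nu : Fin p → ℝ := fun j => if hj : P j then mu (some ⟨j, hj⟩) / M else 0
  have hnu : ∀ j : {j // P j}, nu j.1 = mu (some j) / M := fun j => by simp only [nu]; rw [dif_pos j.2]
  have hnu0 : ∀ j, ¬ P j → nu j = 0 := fun j hj => by simp only [nu]; rw [dif_neg hj]
  have hsum : ∀ c : Fin p → ℝ, ∑ j, nu j * c j = (∑ j : {j // P j}, mu (some j) * c j.1) / M := by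
    intro c
    rw [← aux_sumsub P (fun j => nu j * c j) (fun j hj => by rw [hnu0 j hj, zero_mul]), Finset.sum_div]
    exact Finset.sum_congr rfl fun j _ => by rw [hnu]; ring
  have hsuml : ∀ c : Fin m → ℝ, ∑ j, (lam j / M) * c j = (∑ j, lam j * c j) / M := by
    intro c
    rw [Finset.sum_div]
    exact Finset.sum_congr rfl fun j _ => by ring
  refine ⟨fun i => lam i / M, nu, ?_, ?_⟩
  · rw [aux_lagmult_iff f h g hf hh hg]
    refine ⟨fun j => ?_, fun z => ?_, fun j => ?_⟩
    · by_cases hj : P j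
      · rw [hnu ⟨j, hj⟩]; exact div_nonneg (hmu _) hm0.le
      · rw [hnu0 j hj]
    · rw [hsum, hsuml]
      have : ∑ i, lam i * fderiv ℝ (h i) xs z + (M * fderiv ℝ f xs z +
        ∑ j : {j // P j}, mu (some j) * fderiv ℝ (g j) xs z) = 0 := hlin z
      field_simp
      linarith
    · by_cases hj : P j
      · rw [hj.1, mul_zero]
      · rw [hnu0 j hj, zero_mul]
  · rw [hsum, hsuml]
    have h1 : 0 ≤ ∑ i, lam i * ((1/2) * fderiv ℝ (fderiv ℝ (h i)) xs d d) +
      (M * ((1/2) * fderiv ℝ (fderiv ℝ f) xs d d) +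
        ∑ j : {j // P j}, mu (some j) * ((1/2) * fderiv ℝ (fderiv ℝ (g j)) xs d d)) := hpos
    have e1 : ∀ (ι : Type) [Fintype ι] (u v : ι → ℝ), ∑ i, u i * ((1/2) * v i) = (1/2) * ∑ i, u i * v i := by
      intro ι _ u v; rw [Finset.mul_sum]; exact Finset.sum_congr rfl fun _ _ => by ring
    rw [e1, e1 {j // P j}] at h1
    have : 0 ≤ (∑ i, lam i * fderiv ℝ (fderiv ℝ (h i)) xs d d + M * fderiv ℝ (fderiv ℝ f) xs d d +
        ∑ j : {j // P j}, mu (some j) * fderiv ℝ (fderiv ℝ (g j)) xs d d) / M :=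
      div_nonneg (by linarith) hm0.le
    rw [add_div, add_div, mul_div_cancel_left₀ _ hm0.ne'] at this
    linarith

lemma aux_inj {N : ℕ} (M : Matrix (Fin N) (Fin N) ℝ) (h1 : ∀ a, (fun i => M i a) ≠ 0)
    (h2 : ∀ a b, a ≠ b → ∑ i, M i a * M i b = 0) (y : Fin N → ℝ) (hy : M *ᵥ y = 0) : y = 0 := by
  funext a
  have e1 : ∑ i, M i a * (M *ᵥ y) i = y a * ∑ i, M i a * M i a := by
    simp only [Matrix.mulVec, dotProduct, Finset.mul_sum]
    rw [Finset.sum_comm, Finset.sum_eq_single a]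
    · exact Finset.sum_congr rfl fun _ _ => by ring
    · intro b _ hb
      have := h2 a b hb.symm
      rw [← mul_zero (y b), ← this, Finset.mul_sum]
      exact Finset.sum_congr rfl fun _ _ => by ring
    · simp
  rw [hy] at e1
  simp only [Pi.zero_apply, mul_zero, Finset.sum_const_zero] at e1
  rcases mul_eq_zero.mp e1.symm with h | h
  · exact h
  · exfalso
    apply h1 a
    funext i
    have := (Finset.sum_eq_zero_iff_of_nonneg (fun i _ => mul_self_nonneg (M i a))).mp h i (Finset.mem_univ _)
    exact mul_self_eq_zero.mp this

lemma aux_rank {N n : ℕ} (S : Matrix (Fin N) (Fin n) ℝ) (r : ℕ) (hr : r ≤ S.rank)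
    (hdiag : ∀ (i : Fin N) (k : Fin n), (i : ℕ) ≠ k → S i k = 0)
    (htail : ∀ (i : Fin N) (k : Fin n), (i : ℕ) = k → r ≤ (i : ℕ) → S i k = 0)
    (i : Fin N) (k : Fin n) (hik : (i : ℕ) = k) (hi : (i : ℕ) < r) : S i k ≠ 0 := by
  intro h0
  set s : Finset (Fin n) := Finset.univ.filter fun k' => (k' : ℕ) < r ∧ k' ≠ k with hs
  have hcols : S.rank ≤ s.card := by
    rw [Matrix.rank_eq_finrank_span_cols]
    have hle : Submodule.span ℝ (Set.range S.col) ≤ Submodule.span ℝ ((s.image S.col : Finset _) : Set (Fin N → ℝ)) := by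
      rw [Submodule.span_le]
      rintro _ ⟨k', rfl⟩
      by_cases hk' : k' ∈ s
      · exact Submodule.subset_span (Finset.mem_coe.mpr (Finset.mem_image_of_mem _ hk'))
      · have : S.col k' = 0 := by
          funext i'
          show S i' k' = 0
          by_cases hne : (i' : ℕ) = k'
          · by_cases hlt : (i' : ℕ) < r
            · have : k' = k := by
                by_contra hkk
                exact hk' (by simp [hs, hkk, ← hne, hlt])
              subst this
              have : i' = i := Fin.ext (by omega)
              rw [this, h0]
            · exact htail i' k' hne (not_lt.mp hlt)
          · exact hdiag i' k' hne
        rw [this]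
        exact Submodule.zero_mem _
    calc _ ≤ Module.finrank ℝ (Submodule.span ℝ ((s.image S.col : Finset _) : Set (Fin N → ℝ))) :=
          Submodule.finrank_mono hle
      _ ≤ (s.image S.col).card := finrank_span_finset_le_card _
      _ ≤ s.card := Finset.card_image_le
  have hcard : s.card ≤ ((Finset.range r).erase (k : ℕ)).card := by
    apply Finset.card_le_card_of_injOn (fun k' : Fin n => (k' : ℕ))
    · intro k' hk'
      have hk2 := Finset.mem_filter.mp (Finset.mem_coe.mp hk')
      simp only [Finset.coe_erase, Set.mem_sdiff, Finset.mem_coe, Finset.mem_range, Set.mem_singleton_iff]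
      exact ⟨hk2.2.1, fun h => hk2.2.2 (Fin.ext h)⟩
    · intro a _ b _ h
      exact Fin.ext h
  rw [Finset.card_erase_of_mem (by rw [Finset.mem_range]; omega), Finset.card_range] at hcard
  omega

lemma aux_svd_core {N n : ℕ} (U : (Fin n → ℝ) → Matrix (Fin N) (Fin N) ℝ)
    (S : (Fin n → ℝ) → Matrix (Fin N) (Fin n) ℝ) (V : (Fin n → ℝ) → Matrix (Fin n) (Fin n) ℝ)
    (xs : Fin n → ℝ) (r : ℕ)
    (hU : ∀ i j, DifferentiableAt ℝ (fun x => U x i j) xs)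
    (hS : ∀ i j, DifferentiableAt ℝ (fun x => S x i j) xs)
    (hV : ∀ i j, DifferentiableAt ℝ (fun x => V x i j) xs)
    (hdiag : ∀ᶠ x in 𝓝 xs, ∀ (i : Fin N) (k : Fin n), (i : ℕ) ≠ k → S x i k = 0)
    (htail : ∀ᶠ x in 𝓝 xs, ∀ (i : Fin N) (k : Fin n), (i : ℕ) = k → r + 1 ≤ (i : ℕ) → S x i k = 0)
    (hnz : ∀ (i : Fin N) (k : Fin n), (i : ℕ) = k → (i : ℕ) < r → S xs i k ≠ 0)
    (hU1 : ∀ a, (fun i => U xs i a) ≠ 0)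
    (hU2 : ∀ a b, a ≠ b → ∑ i, U xs i a * U xs i b = 0)
    (hV1 : ∀ a, (fun k => V xs k a) ≠ 0)
    (hV2 : ∀ a b, a ≠ b → ∑ k, V xs k a * V xs k b = 0) :
    ∃ (ρ : (Fin N → ℝ) → ℝ) (w : (Fin n → ℝ) →L[ℝ] ℝ) (l : (Fin n → ℝ) →ₗ[ℝ] ℝ),
      ∀ η : Fin N → ℝ, η ᵥ* (U xs * S xs * (V xs)ᵀ) = 0 →
      ∀ v : Fin n → ℝ, (U xs * S xs * (V xs)ᵀ) *ᵥ v = 0 →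
      HasFDerivAt (fun x => η ⬝ᵥ ((U x * S x * (V x)ᵀ) *ᵥ v)) ((ρ η * l v) • w) xs := by
  have main : ∀ η : Fin N → ℝ, η ᵥ* (U xs * S xs * (V xs)ᵀ) = 0 →
      ∀ v : Fin n → ℝ, (U xs * S xs * (V xs)ᵀ) *ᵥ v = 0 →
      HasFDerivAt (fun x => η ⬝ᵥ ((U x * S x * (V x)ᵀ) *ᵥ v))
        (∑ a : Fin N, ∑ b : Fin n, if (a : ℕ) = r ∧ (b : ℕ) = r then
          ((η ᵥ* U xs) a * ((V xs)ᵀ *ᵥ v) b) • fderiv ℝ (fun x => S x a b) xs else 0) xs := by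
    intro η hη v hv
    have hdxs := hdiag.self_of_nhds
    have hα : (η ᵥ* U xs) ᵥ* S xs = 0 := by
      apply aux_inj (V xs) hV1 hV2
      rw [← Matrix.vecMul_transpose, Matrix.vecMul_vecMul, Matrix.vecMul_vecMul]
      rw [← hη]; simp only [Matrix.mul_assoc]
    have hβ : S xs *ᵥ ((V xs)ᵀ *ᵥ v) = 0 := by
      apply aux_inj (U xs) hU1 hU2
      rw [Matrix.mulVec_mulVec, Matrix.mulVec_mulVec]
      rw [← hv]
    have hα' : ∀ a b, (η ᵥ* U xs) a * S xs a b = 0 := by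
      intro a b
      by_cases hab : (a : ℕ) = b
      · have := congrFun hα b
        simp only [Matrix.vecMul, dotProduct, Pi.zero_apply] at this
        rw [Finset.sum_eq_single a] at this
        · exact this
        · intro a' _ ha'
          rw [hdxs a' b (fun h => ha' (Fin.ext (by omega))), mul_zero]
        · simp
      · rw [hdxs a b hab, mul_zero]
    have hβ' : ∀ a b, S xs a b * ((V xs)ᵀ *ᵥ v) b = 0 := by
      intro a b
      by_cases hab : (a : ℕ) = b
      · have := congrFun hβ a
        simp only [Matrix.mulVec, dotProduct, Pi.zero_apply] at this
        rw [Finset.sum_eq_single b] at this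
        · exact this
        · intro b' _ hb'
          rw [hdxs a b' (fun h => hb' (Fin.ext (by omega))), zero_mul]
        · simp
      · rw [hdxs a b hab, zero_mul]
    have hexp : (fun x => η ⬝ᵥ ((U x * S x * (V x)ᵀ) *ᵥ v)) =
        fun x => ∑ a, ∑ b, (η ᵥ* U x) a * (S x a b * ((V x)ᵀ *ᵥ v) b) := by
      funext x
      rw [← Matrix.mulVec_mulVec, ← Matrix.mulVec_mulVec, Matrix.dotProduct_mulVec]
      simp only [dotProduct, Matrix.mulVec, Finset.mul_sum]
    rw [hexp]
    apply HasFDerivAt.fun_sum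
    intro a _
    apply HasFDerivAt.fun_sum
    intro b _
    have dα : DifferentiableAt ℝ (fun x => (η ᵥ* U x) a) xs := by
      simp only [Matrix.vecMul, dotProduct]
      exact DifferentiableAt.fun_sum fun i _ => (hU i a).const_mul _
    have dβ : DifferentiableAt ℝ (fun x => ((V x)ᵀ *ᵥ v) b) xs := by
      simp only [Matrix.mulVec, dotProduct, Matrix.transpose_apply]
      exact DifferentiableAt.fun_sum fun i _ => (hV i b).mul_const _
    have hd := dα.hasFDerivAt.mul ((hS a b).hasFDerivAt.mul dβ.hasFDerivAt)
    refine hd.congr_fderiv ?_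
    have hS0 : (∀ᶠ x in 𝓝 xs, S x a b = 0) → fderiv ℝ (fun x => S x a b) xs = 0 := by
      intro hev
      have : (fun x => S x a b) =ᶠ[𝓝 xs] fun _ => (0:ℝ) := hev
      rw [this.fderiv_eq]; simp
    have e1 : ((η ᵥ* U xs) a • (S xs a b • fderiv ℝ (fun x => ((V x)ᵀ *ᵥ v) b) xs +
        ((V xs)ᵀ *ᵥ v) b • fderiv ℝ (fun x => S x a b) xs) +
        (S xs a b * ((V xs)ᵀ *ᵥ v) b) • fderiv ℝ (fun x => (η ᵥ* U x) a) xs) =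
        ((η ᵥ* U xs) a * ((V xs)ᵀ *ᵥ v) b) • fderiv ℝ (fun x => S x a b) xs := by
      rw [hβ', zero_smul, add_zero, smul_add, smul_smul, hα', zero_smul, zero_add, smul_smul]
    refine Eq.trans e1 ?_
    split_ifs with hc
    · rfl
    · by_cases hab : (a : ℕ) = b
      · rcases lt_trichotomy (a : ℕ) r with h | h | h
        · have := (mul_eq_zero.mp (hα' a b)).resolve_right (hnz a b hab h)
          rw [this, zero_mul, zero_smul]
        · exact absurd ⟨h, hab ▸ h⟩ hc
        · rw [hS0 (htail.mono fun x hx => hx a b hab h), smul_zero]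
      · rw [hS0 (hdiag.mono fun x hx => hx a b hab), smul_zero]
  by_cases hr : r < N ∧ r < n
  · let a0 : Fin N := ⟨r, hr.1⟩
    let b0 : Fin n := ⟨r, hr.2⟩
    refine ⟨fun η => (η ᵥ* U xs) a0, fderiv ℝ (fun x => S x a0 b0) xs,
      LinearMap.proj b0 ∘ₗ Matrix.mulVecLin ((V xs)ᵀ), fun η hη v hv => ?_⟩
    refine (main η hη v hv).congr_fderiv ?_
    rw [Finset.sum_eq_single a0, Finset.sum_eq_single b0]
    · simp [a0, b0, Matrix.mulVec_transpose]
    · intro b _ hb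
      rw [if_neg]
      exact fun h => hb (Fin.ext h.2)
    · simp
    · intro a _ ha
      apply Finset.sum_eq_zero
      intro b _
      rw [if_neg]
      exact fun h => ha (Fin.ext h.1)
    · simp
  · refine ⟨fun _ => 0, 0, 0, fun η hη v hv => ?_⟩
    refine (main η hη v hv).congr_fderiv ?_
    rw [smul_zero]
    apply Finset.sum_eq_zero
    intro a _
    apply Finset.sum_eq_zero
    intro b _
    rw [if_neg]
    rintro ⟨h1, h2⟩
    exact hr ⟨h1 ▸ a.2, h2 ▸ b.2⟩

lemma aux_svd {n m p : ℕ} (h : Fin m → (Fin n → ℝ) → ℝ)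
    (g : Fin p → (Fin n → ℝ) → ℝ)
    (hh : ∀ i, ContDiff ℝ 2 (h i)) (hg : ∀ j, ContDiff ℝ 2 (g j))
    (xs : Fin n → ℝ)
    (hrank : ∀ᶠ x in nhds xs, (Jac h g xs x).rank ≤ (Jac h g xs xs).rank + 1)
    (e : (Fin m ⊕ {j : Fin p // g j xs = 0}) ≃
      Fin (m + Fintype.card {j : Fin p // g j xs = 0}))
    (hsvd : SmoothSVD h g xs e) :
    ∃ (ρ : (Fin m → ℝ) → (Fin p → ℝ) → ℝ) (w : (Fin n → ℝ) →L[ℝ] ℝ) (l : (Fin n → ℝ) →ₗ[ℝ] ℝ),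
      ∀ (lam : Fin m → ℝ) (mu : Fin p → ℝ), (∀ j, g j xs ≠ 0 → mu j = 0) →
      (∀ z, ∑ i, lam i * fderiv ℝ (h i) xs z + ∑ j, mu j * fderiv ℝ (g j) xs z = 0) →
      ∀ v, critSub h g xs v → ∀ d,
      ∑ i, lam i * fderiv ℝ (fderiv ℝ (h i)) xs d v + ∑ j, mu j * fderiv ℝ (fderiv ℝ (g j)) xs d v
        = ρ lam mu * w d * l v := by
  obtain ⟨O, hO, U, S, V, hU, hS, hV, hJ, hdiag, htail, hU1, hU2, hV1, hV2⟩ := hsvd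
  have hxO : xs ∈ O := mem_of_mem_nhds hO
  set r := (Jac h g xs xs).rank with hr
  have hJeq : ∀ x ∈ O, (Jac h g xs x).submatrix e.symm id = U x * S x * (V x)ᵀ := by
    intro x hx
    ext i k
    exact hJ x hx i k
  have hrS : r ≤ (S xs).rank := by
    have h1 : ((Jac h g xs xs).submatrix e.symm (Equiv.refl (Fin n))).rank = r := Matrix.rank_submatrix _ _ _
    have h2 := hJeq xs hxO
    rw [← h1]
    change ((Jac h g xs xs).submatrix e.symm id).rank ≤ _
    rw [h2]
    exact (Matrix.rank_mul_le_left _ _).trans (Matrix.rank_mul_le_right _ _)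
  obtain ⟨ρ, w, l, H⟩ := aux_svd_core U S V xs r
    (fun i j => (hU i j).differentiableAt hO) (fun i j => (hS i j).differentiableAt hO)
    (fun i j => (hV i j).differentiableAt hO)
    (by filter_upwards [hO] with x hx i k hik using hdiag x hx i k hik)
    (by filter_upwards [hO, hrank] with x hx hxr i k hik hi using htail x hx i k hik (hxr.trans hi))
    (aux_rank (S xs) r hrS (hdiag xs hxO) (htail xs hxO)) hU1 hU2 hV1 hV2
  let η : (Fin m → ℝ) → (Fin p → ℝ) → Fin m ⊕ {j : Fin p // g j xs = 0} → ℝ :=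
    fun lam mu => Sum.elim lam (fun j => mu j.1)
  refine ⟨fun lam mu => ρ (η lam mu ∘ e.symm), w, l, fun lam mu hmu hker v hv d => ?_⟩
  -- rows applied to a vector
  have hsingle : ∀ (A : (Fin n → ℝ) →L[ℝ] ℝ) (z : Fin n → ℝ), ∑ k, A (Pi.single k 1) * z k = A z := by
    intro A z
    have : z = ∑ k, z k • (Pi.single k (1:ℝ) : Fin n → ℝ) := by
      funext j
      simp [Finset.sum_apply, Pi.single_apply]
    conv_rhs => rw [this]
    simp [map_sum, mul_comm]
  have hrow : ∀ x z (i : Fin m ⊕ {j : Fin p // g j xs = 0}), (Jac h g xs x *ᵥ z) i =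
      Sum.elim (fun i' => fderiv ℝ (h i') x z) (fun j' => fderiv ℝ (g j'.1) x z) i := by
    intro x z i
    rcases i with i | j
    · exact hsingle (fderiv ℝ (h i) x) z
    · exact hsingle (fderiv ℝ (g j.1) x) z
  have hsum : ∀ (c : Fin m → ℝ) (c' : Fin p → ℝ),
      ∑ i, η lam mu i * Sum.elim c (fun j : {j : Fin p // g j xs = 0} => c' j.1) i =
      ∑ i, lam i * c i + ∑ j, mu j * c' j := by
    intro c c'
    rw [Fintype.sum_sum_type]
    simp only [η, Sum.elim_inl, Sum.elim_inr]
    rw [aux_sumsub (fun j => g j xs = 0) (fun j => mu j * c' j) (fun j hj => by rw [hmu j hj, zero_mul])]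
  have hF : ∀ x z, (η lam mu ∘ e.symm) ⬝ᵥ (((Jac h g xs x).submatrix e.symm id) *ᵥ z) =
      ∑ i, lam i * fderiv ℝ (h i) x z + ∑ j, mu j * fderiv ℝ (g j) x z := by
    intro x z
    rw [← hsum]
    rw [← Equiv.sum_comp e.symm]
    simp only [dotProduct, Function.comp]
    apply Finset.sum_congr rfl
    intro i _
    congr 1
    exact hrow x z (e.symm i)
  have hη0 : (η lam mu ∘ e.symm) ᵥ* (U xs * S xs * (V xs)ᵀ) = 0 := by
    rw [← hJeq xs hxO]
    apply dotProduct_eq_zero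
    intro z
    rw [← Matrix.dotProduct_mulVec, hF, hker]
  have hv0 : (U xs * S xs * (V xs)ᵀ) *ᵥ v = 0 := by
    rw [← hJeq xs hxO]
    funext i
    refine (hrow xs v (e.symm i)).trans ?_
    rcases e.symm i with i | j
    · exact hv.1 i
    · exact hv.2 j.1 j.2
  have hder := H _ hη0 v hv0
  have hder2 : HasFDerivAt (fun x => ∑ i, lam i * fderiv ℝ (h i) x v + ∑ j, mu j * fderiv ℝ (g j) x v)
      ((ρ (η lam mu ∘ e.symm) * l v) • w) xs := by
    refine hder.congr_of_eventuallyEq ?_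
    filter_upwards [hO] with x hx
    rw [← hJeq x hx, hF]
  have happ : ∀ φ : (Fin n → ℝ) → ℝ, ContDiff ℝ 2 φ → HasFDerivAt (fun x => fderiv ℝ φ x v)
      ((fderiv ℝ (fderiv ℝ φ) xs).flip v) xs := by
    intro φ hφ
    have h1 := (aux_diff2 φ hφ xs).hasFDerivAt
    have h2 := h1.clm_apply (hasFDerivAt_const v xs)
    refine h2.congr_fderiv ?_
    ext; simp
  have hder3 := (HasFDerivAt.fun_sum (u := Finset.univ) fun i _ => (happ (h i) (hh i)).const_mul (lam i)).add
    (HasFDerivAt.fun_sum (u := Finset.univ) fun j _ => (happ (g j) (hg j)).const_mul (mu j))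
  have heq := congrArg (fun A : (Fin n → ℝ) →L[ℝ] ℝ => A d) (hder3.unique hder2)
  simp [_root_.sum_apply] at heq
  rw [heq]; ring

lemma aux_compact {n m p : ℕ} (f : (Fin n → ℝ) → ℝ) (h : Fin m → (Fin n → ℝ) → ℝ)
    (g : Fin p → (Fin n → ℝ) → ℝ)
    (hf : ContDiff ℝ 2 f) (hh : ∀ i, ContDiff ℝ 2 (h i)) (hg : ∀ j, ContDiff ℝ 2 (g j))
    (xs : Fin n → ℝ) (hmfcq : MFCQ h g xs) :
    IsCompact {η : (Fin m → ℝ) × (Fin p → ℝ) | IsLagMult f h g xs η.1 η.2} ∧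
    Convex ℝ {η : (Fin m → ℝ) × (Fin p → ℝ) | IsLagMult f h g xs η.1 η.2} := by
  have hset : {η : (Fin m → ℝ) × (Fin p → ℝ) | IsLagMult f h g xs η.1 η.2} =
      {η | (∀ j, 0 ≤ η.2 j) ∧ (∀ z, fderiv ℝ f xs z + ∑ i, η.1 i * fderiv ℝ (h i) xs z
        + ∑ j, η.2 j * fderiv ℝ (g j) xs z = 0) ∧ ∀ j, η.2 j * g j xs = 0} := by
    ext η
    exact aux_lagmult_iff f h g hf hh hg η.1 η.2 xs
  rw [hset]
  obtain ⟨hli, dh, hdh1, hdh2⟩ := hmfcq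
  have hsurj := aux_surj _ hli
  choose zz hzz using fun i : Fin m => hsurj (Pi.single i 1)
  have hzz' : ∀ i k, fderiv ℝ (h k) xs (zz i) = if k = i then 1 else 0 := by
    intro i k
    have := congrFun (hzz i) k
    simpa [Pi.single_apply] using this
  let B : Fin p → ℝ := fun j => if g j xs = 0 then fderiv ℝ f xs dh / (-(fderiv ℝ (g j) xs dh)) else 0
  let C : Fin m → ℝ := fun i => |fderiv ℝ f xs (zz i)| + ∑ j, B j * |fderiv ℝ (g j) xs (zz i)|
  constructor
  · refine IsCompact.of_isClosed_subset
      ((isCompact_Icc (a := -C) (b := C)).prod (isCompact_Icc (a := (0 : Fin p → ℝ)) (b := B))) ?_ ?_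
    · refine IsClosed.inter (s₁ := {η : (Fin m → ℝ) × (Fin p → ℝ) | ∀ j, 0 ≤ η.2 j}) ?_
        (IsClosed.inter (s₁ := {η : (Fin m → ℝ) × (Fin p → ℝ) | ∀ z, fderiv ℝ f xs z + ∑ i, η.1 i * fderiv ℝ (h i) xs z
        + ∑ j, η.2 j * fderiv ℝ (g j) xs z = 0}) (s₂ := {η : (Fin m → ℝ) × (Fin p → ℝ) | ∀ j, η.2 j * g j xs = 0}) ?_ ?_)
      · simp only [Set.setOf_forall]
        exact isClosed_iInter fun j => isClosed_le continuous_const (by fun_prop)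
      · simp only [Set.setOf_forall]
        exact isClosed_iInter fun j => isClosed_eq (by fun_prop) continuous_const
      · simp only [Set.setOf_forall]
        exact isClosed_iInter fun j => isClosed_eq (by fun_prop) continuous_const
    · rintro ⟨lam, mu⟩ ⟨h1, h2, h3⟩
      simp only at h1 h2 h3
      have hmu0 : ∀ j, g j xs ≠ 0 → mu j = 0 := fun j hj => by
        rcases mul_eq_zero.mp (h3 j) with h | h
        · exact h
        · exact absurd h hj
      have hB : ∀ j, mu j ≤ B j := by
        intro j
        by_cases hj : g j xs = 0
        · have hneg := hdh2 j hj
          simp only [B, if_pos hj]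
          rw [le_div_iff₀ (by linarith)]
          have e1 := h2 dh
          simp only [hdh1, mul_zero, Finset.sum_const_zero, add_zero] at e1
          have e2 : mu j * -(fderiv ℝ (g j) xs dh) ≤ ∑ k, mu k * -(fderiv ℝ (g k) xs dh) := by
            refine Finset.single_le_sum (f := fun k => mu k * -(fderiv ℝ (g k) xs dh)) ?_ (Finset.mem_univ j)
            intro k _
            by_cases hk : g k xs = 0
            · exact mul_nonneg (h1 k) (by linarith [hdh2 k hk])
            · simp [hmu0 k hk]
          simp only [mul_neg, Finset.sum_neg_distrib] at e2
          linarith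
        · simp [B, hj, hmu0 j hj]
      have hC : ∀ i, |lam i| ≤ C i := by
        intro i
        have e1 := h2 (zz i)
        simp only [hzz', mul_ite, mul_one, mul_zero, Finset.sum_ite_eq', Finset.mem_univ, if_true] at e1
        have e2 : lam i = -(fderiv ℝ f xs (zz i) + ∑ j, mu j * fderiv ℝ (g j) xs (zz i)) := by linarith
        rw [e2, abs_neg]
        refine (abs_add_le _ _).trans (add_le_add le_rfl ((Finset.abs_sum_le_sum_abs _ _).trans ?_))
        refine Finset.sum_le_sum fun j _ => ?_
        rw [abs_mul, abs_of_nonneg (h1 j)]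
        exact mul_le_mul_of_nonneg_right (hB j) (abs_nonneg _)
      exact ⟨⟨fun i => (abs_le.mp (hC i)).1, fun i => (abs_le.mp (hC i)).2⟩, ⟨h1, hB⟩⟩
  · rintro ⟨l1, m1⟩ ⟨a1, a2, a3⟩ ⟨l2, m2⟩ ⟨b1, b2, b3⟩ s t hs ht hst
    simp only at a1 a2 a3 b1 b2 b3
    refine ⟨fun j => ?_, fun z => ?_, fun j => ?_⟩
    · simp only [Prod.smul_mk, Prod.mk_add_mk, Pi.add_apply, Pi.smul_apply, smul_eq_mul]
      exact add_nonneg (mul_nonneg hs (a1 j)) (mul_nonneg ht (b1 j))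
    · simp only [Prod.smul_mk, Prod.mk_add_mk, Pi.add_apply, Pi.smul_apply, smul_eq_mul, add_mul,
        Finset.sum_add_distrib, mul_assoc, ← Finset.mul_sum]
      linear_combination s * a2 z + t * b2 z - fderiv ℝ f xs z * hst
    · simp only [Prod.smul_mk, Prod.mk_add_mk, Pi.add_apply, Pi.smul_apply, smul_eq_mul]
      linear_combination s * a3 j + t * b3 j

/-- MFCQ, rank of `J(x)` at most `r + 1` near `xs`, the smooth SVD assumption
and GSCS imply SSOC at a local minimizer. -/
theorem stmt12 {n m p : ℕ} (f : (Fin n → ℝ) → ℝ) (h : Fin m → (Fin n → ℝ) → ℝ)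
    (g : Fin p → (Fin n → ℝ) → ℝ)
    (hf : ContDiff ℝ 2 f) (hh : ∀ i, ContDiff ℝ 2 (h i)) (hg : ∀ j, ContDiff ℝ 2 (g j))
    (xs : Fin n → ℝ) (hfeas : Feas h g xs)
    (hmin : IsLocalMinOn f {x | Feas h g x} xs)
    (hmfcq : MFCQ h g xs)
    (hrank : ∀ᶠ x in nhds xs, (Jac h g xs x).rank ≤ (Jac h g xs xs).rank + 1)
    (e : (Fin m ⊕ {j : Fin p // g j xs = 0}) ≃
      Fin (m + Fintype.card {j : Fin p // g j xs = 0}))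
    (hsvd : SmoothSVD h g xs e)
    (hgscs : GSCS f h g xs) :
    ∃ (lam : Fin m → ℝ) (mu : Fin p → ℝ), IsLagMult f h g xs lam mu ∧
      ∀ d, critCone f h g xs d → 0 ≤ hessQ (Lagr f h g lam mu) xs d := by
  obtain ⟨ρ, w, l, hρ⟩ := aux_svd h g hh hg xs hrank e hsvd
  obtain ⟨hK, hKc⟩ := aux_compact f h g hf hh hg xs hmfcq
  set K := {η : (Fin m → ℝ) × (Fin p → ℝ) | IsLagMult f h g xs η.1 η.2} with hKdef
  have hKiff : ∀ η, η ∈ K ↔ _ := fun η => aux_lagmult_iff f h g hf hh hg η.1 η.2 xs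
  have hinact : ∀ η ∈ K, ∀ j, g j xs ≠ 0 → η.2 j = 0 := fun η hη j hj => by
    rcases mul_eq_zero.mp (((hKiff η).mp hη).2.2 j) with h | h
    · exact h
    · exact absurd h hj
  have hsoc := aux_soc f h g hf hh hg xs hfeas hmin hmfcq
  obtain ⟨lam0, mu0, hη0, -⟩ := hsoc 0 ⟨by simp, by simp, by simp⟩
  have hη0K : (lam0, mu0) ∈ K := hη0
  -- index set of always-vanishing multipliers
  let Z : Fin p → Prop := fun j => g j xs = 0 ∧
    ∀ (lam : Fin m → ℝ) (mu : Fin p → ℝ), IsLagMult f h g xs lam mu → mu j = 0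
  let T : Submodule ℝ (Fin n → ℝ) :=
    { carrier := {d | (∀ i, fderiv ℝ (h i) xs d = 0) ∧ ∀ j, g j xs = 0 → ¬ Z j → fderiv ℝ (g j) xs d = 0}
      zero_mem' := ⟨by simp, by simp⟩
      add_mem' := fun {a b} ha hb => ⟨fun i => by rw [map_add, ha.1 i, hb.1 i, add_zero],
        fun j hj hz => by rw [map_add, ha.2 j hj hz, hb.2 j hj hz, add_zero]⟩
      smul_mem' := fun c a ha => ⟨fun i => by rw [map_smul, ha.1 i, smul_zero],
        fun j hj hz => by rw [map_smul, ha.2 j hj hz, smul_zero]⟩ }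
  let N : Submodule ℝ (Fin n → ℝ) :=
    { carrier := {d | critSub h g xs d}
      zero_mem' := ⟨by simp, by simp⟩
      add_mem' := fun {a b} ha hb => ⟨fun i => by rw [map_add, ha.1 i, hb.1 i, add_zero],
        fun j hj => by rw [map_add, ha.2 j hj, hb.2 j hj, add_zero]⟩
      smul_mem' := fun c a ha => ⟨fun i => by rw [map_smul, ha.1 i, smul_zero],
        fun j hj => by rw [map_smul, ha.2 j hj, smul_zero]⟩ }
  have hNT : N ≤ T := fun d hd => ⟨hd.1, fun j hj _ => hd.2 j hj⟩
  have hCT : ∀ d, critCone f h g xs d → d ∈ T := by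
    intro d hd
    refine ⟨hd.2.1, fun j hj hZ => ?_⟩
    have hex : ∃ (lam : Fin m → ℝ) (mu : Fin p → ℝ), IsLagMult f h g xs lam mu ∧ mu j ≠ 0 := by
      by_contra hcon
      push Not at hcon
      exact hZ ⟨hj, hcon⟩
    obtain ⟨lam, mu, hlm, hne⟩ := hex
    have hlmK : (lam, mu) ∈ K := hlm
    have h1 := ((aux_lagmult_iff f h g hf hh hg lam mu xs).mp hlm)
    have e1 := h1.2.1 d
    simp only [hd.1, hd.2.1, mul_zero, Finset.sum_const_zero, add_zero, zero_add] at e1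
    have e2 := (Finset.sum_eq_zero_iff_of_nonpos (s := Finset.univ)
      (f := fun j => mu j * fderiv ℝ (g j) xs d) (fun k _ => by
        by_cases hk : g k xs = 0
        · exact mul_nonpos_of_nonneg_of_nonpos (h1.1 k) (hd.2.2 k hk)
        · have := hinact _ hlmK k hk
          simp only at this
          simp [this])).mp e1 j (Finset.mem_univ j)
    rcases mul_eq_zero.mp e2 with h | h
    · exact absurd h hne
    · exact h
  have hTf : ∀ d ∈ T, fderiv ℝ f xs d = 0 := by
    intro d hd
    have e1 := ((hKiff _).mp hη0K).2.1 d
    simp only [hd.1, mul_zero, Finset.sum_const_zero, add_zero] at e1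
    rw [Finset.sum_eq_zero] at e1
    · linarith
    · intro j _
      by_cases hj : g j xs = 0
      · by_cases hZ : Z j
        · rw [hZ.2 lam0 mu0 hη0, zero_mul]
        · rw [hd.2 j hj hZ, mul_zero]
      · rw [show mu0 j = 0 from hinact _ hη0K j hj, zero_mul]
  have hZsub : ∀ j k, Z j → Z k → j = k := fun j k hj hk => hgscs hj hk
  have hxfex : ∃ xf : (Fin n → ℝ) →ₗ[ℝ] ℝ, ∀ j, Z j → ∀ d, xf d = fderiv ℝ (g j) xs d := by
    by_cases hex : ∃ j, Z j
    · obtain ⟨j, hj⟩ := hex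
      exact ⟨(fderiv ℝ (g j) xs).toLinearMap, fun k hk d => by rw [hZsub k j hk hj]; rfl⟩
    · exact ⟨0, fun j hj => absurd ⟨j, hj⟩ hex⟩
  obtain ⟨xf, hxf⟩ := hxfex
  have hxfN : ∀ v ∈ T, xf v = 0 → v ∈ N := by
    intro v hv h0
    refine ⟨hv.1, fun j hj => ?_⟩
    by_cases hZ : Z j
    · rw [← hxf j hZ, h0]
    · exact hv.2 j hj hZ
  have hcone : ∀ d ∈ T, xf d ≤ 0 → critCone f h g xs d := by
    intro d hd h0
    refine ⟨hTf d hd, hd.1, fun j hj => ?_⟩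
    by_cases hZ : Z j
    · rw [← hxf j hZ]; exact h0
    · exact (hd.2 j hj hZ).le
  let bl : ((Fin n → ℝ) → ℝ) → (Fin n → ℝ) →ₗ[ℝ] (Fin n → ℝ) →ₗ[ℝ] ℝ := fun φ =>
    LinearMap.mk₂ ℝ (fun a b => fderiv ℝ (fderiv ℝ φ) xs a b)
      (fun a b c => by simp) (fun c a b => by simp) (fun a b c => by simp) (fun c a b => by simp)
  let Q : ((Fin m → ℝ) × (Fin p → ℝ)) → (Fin n → ℝ) →ₗ[ℝ] (Fin n → ℝ) →ₗ[ℝ] ℝ := fun η =>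
    bl f + ∑ i, η.1 i • bl (h i) + ∑ j, η.2 j • bl (g j)
  have hQ : ∀ η a b, Q η a b = fderiv ℝ (fderiv ℝ f) xs a b
      + ∑ i, η.1 i * fderiv ℝ (fderiv ℝ (h i)) xs a b
      + ∑ j, η.2 j * fderiv ℝ (fderiv ℝ (g j)) xs a b := by
    intro η a b
    simp [Q, bl, LinearMap.sum_apply]
  have hsymm : ∀ η ∈ K, ∀ a b, Q η a b = Q η b a := by
    intro η _ a b
    rw [hQ, hQ, aux_symm f hf xs a b]
    simp only [fun i => aux_symm (h i) (hh i) xs a b, fun i => aux_symm (g i) (hg i) xs a b]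
  have H : ∀ d ∈ T, ∃ η ∈ K, 0 ≤ Q η d d := by
    intro d hd
    rcases le_total (xf d) 0 with h0 | h0
    · obtain ⟨lam, mu, h1, h2⟩ := hsoc d (hcone d hd h0)
      exact ⟨(lam, mu), h1, by rw [hQ]; exact h2⟩
    · obtain ⟨lam, mu, h1, h2⟩ := hsoc (-d) (hcone (-d) (T.neg_mem hd) (by simpa using h0))
      refine ⟨(lam, mu), h1, ?_⟩
      have : Q (lam, mu) (-d) (-d) = Q (lam, mu) d d := by simp
      rw [← this, hQ]; exact h2
  have hdiff : ∀ η ∈ K, ∀ d ∈ T, ∀ v ∈ N, Q η d v = Q (lam0, mu0) d v +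
      ρ (η.1 - lam0) (η.2 - mu0) * w.toLinearMap d * l v := by
    intro η hη d _ v hv
    have e1 := hρ (η.1 - lam0) (η.2 - mu0) (fun j hj => by
      have a := hinact _ hη j hj
      have b := hinact _ hη0K j hj
      simp only at b
      simp [a, b]) (fun z => by
        have a := ((hKiff _).mp hη).2.1 z
        have b := ((hKiff _).mp hη0K).2.1 z
        simp only [Pi.sub_apply, sub_mul, Finset.sum_sub_distrib]
        simp only at b
        linarith) v hv d
    simp only [Pi.sub_apply, sub_mul, Finset.sum_sub_distrib] at e1
    rw [hQ, hQ]
    simp only [ContinuousLinearMap.coe_coe]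
    linarith
  have hpair := aux_pair K T N hNT Q hsymm (lam0, mu0) hη0K (fun η => ρ (η.1 - lam0) (η.2 - mu0))
    w.toLinearMap l hdiff H xf hxfN
  let q : (Fin n → ℝ) → ((Fin m → ℝ) × (Fin p → ℝ)) →L[ℝ] ℝ := fun d =>
    (∑ i, (fderiv ℝ (fderiv ℝ (h i)) xs d d) •
      (ContinuousLinearMap.proj i).comp (ContinuousLinearMap.fst ℝ (Fin m → ℝ) (Fin p → ℝ)))
    + ∑ j, (fderiv ℝ (fderiv ℝ (g j)) xs d d) •
      (ContinuousLinearMap.proj j).comp (ContinuousLinearMap.snd ℝ (Fin m → ℝ) (Fin p → ℝ))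
  have hqQ : ∀ d η, q d η + fderiv ℝ (fderiv ℝ f) xs d d = Q η d d := by
    intro d η
    rw [hQ]
    simp only [q, ContinuousLinearMap.add_apply, _root_.sum_apply, ContinuousLinearMap.smul_apply,
      ContinuousLinearMap.comp_apply, ContinuousLinearMap.proj_apply, ContinuousLinearMap.coe_fst',
      ContinuousLinearMap.coe_snd', smul_eq_mul]
    simp only [mul_comm (η.1 _), mul_comm (η.2 _)]
    ring
  obtain ⟨η, hη, hfin⟩ := aux_minimax K hK hKc (T : Set (Fin n → ℝ)) q
    (fun d => fderiv ℝ (fderiv ℝ f) xs d d)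
    ⟨0, T.zero_mem, fun η => by rw [hqQ]; simp⟩
    (fun d1 hd1 d2 hd2 => by
      obtain ⟨z, hz, hz2⟩ := hpair d1 hd1 d2 hd2
      exact ⟨z, hz, fun η hη => by rw [hqQ, hqQ, hqQ]; exact hz2 η hη⟩)
    (fun d1 hd1 r hr => ⟨Real.sqrt r • d1, T.smul_mem _ hd1, fun η _ => by
      rw [hqQ, hqQ]
      simp only [map_smul, LinearMap.smul_apply, smul_eq_mul]
      rw [← mul_assoc, Real.mul_self_sqrt hr]⟩)
    (fun d hd => by
      obtain ⟨η, h1, h2⟩ := H d hd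
      exact ⟨η, h1, by rw [hqQ]; exact h2⟩)
  refine ⟨η.1, η.2, hη, fun d hd => ?_⟩
  rw [aux_hess f h g hf hh hg, ← hQ, ← hqQ]
  exact hfin d (hCT d hd)
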